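/- Let F be a field with char F ∉ {2, 3}. In the Highwater algebra H over F, the algebra decomposes as the direct sum H = E_1 ⊕ E_0 ⊕ E_2 ⊕ E_{1/2} of eigenspaces E_μ = {x ∈ H : a_0·x = μx} of the left multiplication operator by a_0, and moreover E_1 = F·a_0. -/

import Mathlib

/- STATEMENT 3: in the Highwater algebra over a field of characteristic ≠ 2, 3,
the algebra is the direct sum of the eigenspaces of ad(a_0) for the eigenvalues
1, 0, 2, 1/2, and the 1-eigenspace is F·a_0. -/

/-- The underlying vector space of the Highwater algebra: formal `F`-linear combinations
of basis elements `a_i` (`i : ℤ`, encoded `Sum.inl i`) and `s_j` (`j ≥ 1`, encoded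
`Sum.inr (j - 1)`). -/
abbrev HW (F : Type*) [Field F] := (ℤ ⊕ ℕ) →₀ F

variable (F : Type*) [Field F]

/-- The axis `a_i` of the Highwater algebra. -/
noncomputable def hwa (i : ℤ) : HW F := Finsupp.single (Sum.inl i) 1

/-- The element `s_j` of the Highwater algebra (`s_0 = 0`). -/
noncomputable def hws : ℕ → HW F
  | 0 => 0
  | j + 1 => Finsupp.single (Sum.inr j) 1

/-- Product of two basis elements of the Highwater algebra:
`a_i · a_k = (1/2)(a_i + a_k) + s_{|i-k|}`,
`a_i · s_j = -(3/4) a_i + (3/8)(a_{i-j} + a_{i+j}) + (3/2) s_j`,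
`s_j · s_k = (3/4)(s_j + s_k) - (3/8)(s_{|j-k|} + s_{j+k})`. -/
noncomputable def hwBM : ℤ ⊕ ℕ → ℤ ⊕ ℕ → HW F
  | Sum.inl i, Sum.inl k => ((1 : F) / 2) • (hwa F i + hwa F k) + hws F (i - k).natAbs
  | Sum.inl i, Sum.inr j =>
      (-(3 : F) / 4) • hwa F i
        + ((3 : F) / 8) • (hwa F (i - ((j : ℤ) + 1)) + hwa F (i + ((j : ℤ) + 1)))
        + ((3 : F) / 2) • hws F (j + 1)
  | Sum.inr j, Sum.inl i =>
      (-(3 : F) / 4) • hwa F i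
        + ((3 : F) / 8) • (hwa F (i - ((j : ℤ) + 1)) + hwa F (i + ((j : ℤ) + 1)))
        + ((3 : F) / 2) • hws F (j + 1)
  | Sum.inr j, Sum.inr k =>
      ((3 : F) / 4) • (hws F (j + 1) + hws F (k + 1))
        - ((3 : F) / 8) • (hws F ((j : ℤ) - (k : ℤ)).natAbs + hws F (j + k + 2))

/-- The multiplication of the Highwater algebra: the bilinear extension of `hwBM`. -/
noncomputable def hwMul (x y : HW F) : HW F :=
  x.sum fun i ci => y.sum fun j cj => (ci * cj) • hwBM F i j

lemma hwMul_zero (x : HW F) : hwMul F x 0 = 0 := by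
  unfold hwMul
  simp

lemma hwMul_add (x y z : HW F) : hwMul F x (y + z) = hwMul F x y + hwMul F x z := by
  unfold hwMul
  rw [← Finsupp.sum_add]
  refine Finsupp.sum_congr fun i _ => ?_
  exact Finsupp.sum_add_index' (fun j => by simp) (fun j c1 c2 => by
    rw [mul_add, add_smul])

lemma hwMul_smul (c : F) (x y : HW F) : hwMul F x (c • y) = c • hwMul F x y := by
  unfold hwMul
  rw [Finsupp.smul_sum]
  refine Finsupp.sum_congr fun i _ => ?_
  rw [Finsupp.sum_smul_index' (fun j => by simp), Finsupp.smul_sum]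
  exact Finsupp.sum_congr fun j _ => by
    rw [smul_eq_mul, smul_smul, mul_left_comm]

/-- The `μ`-eigenspace of the left multiplication operator by `a_0` on the
Highwater algebra. -/
noncomputable def hwEig (μ : F) : Submodule F (HW F) where
  carrier := {x | hwMul F (hwa F 0) x = μ • x}
  zero_mem' := by simp [hwMul_zero]
  add_mem' := fun hx hy => by
    simp only [Set.mem_setOf_eq] at *
    rw [hwMul_add, hx, hy, smul_add]
  smul_mem' := fun c x hx => by
    simp only [Set.mem_setOf_eq] at *
    rw [hwMul_smul, hx, smul_smul, smul_smul, mul_comm]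

lemma hwMul_hwa_zero_single (p : ℤ ⊕ ℕ) :
    hwMul F (hwa F 0) (Finsupp.single p 1) = hwBM F (Sum.inl 0) p := by
  simp [hwMul, hwa]

lemma hwMul_hwa_zero_hwa (k : ℤ) :
    hwMul F (hwa F 0) (hwa F k) = ((1 : F) / 2) • (hwa F 0 + hwa F k) + hws F k.natAbs := by
  simpa [hwBM, hwa] using hwMul_hwa_zero_single F (Sum.inl k)

lemma hwMul_hwa_zero_hws_succ (j : ℕ) :
    hwMul F (hwa F 0) (hws F (j + 1)) =
      (-(3 : F) / 4) • hwa F 0 + ((3 : F) / 8) • (hwa F (-((j : ℤ) + 1)) + hwa F ((j : ℤ) + 1))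
        + ((3 : F) / 2) • hws F (j + 1) := by
  rw [hws, hwMul_hwa_zero_single]
  simp only [hwBM, zero_sub, zero_add, hws]

/-- Left multiplication by `a_0` as a linear endomorphism of the Highwater algebra. -/
noncomputable def hwLeft : Module.End F (HW F) where
  toFun := hwMul F (hwa F 0)
  map_add' := hwMul_add F _
  map_smul' c y := hwMul_smul F c _ y

lemma hwLeft_apply (x : HW F) : hwLeft F x = hwMul F (hwa F 0) x := rfl

lemma mem_hwEig {μ : F} {x : HW F} : x ∈ hwEig F μ ↔ hwLeft F x = μ • x := Iff.rfl

lemma hwEig_eq_eigenspace (μ : F) : hwEig F μ = (hwLeft F).eigenspace μ := by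
  ext x
  rw [mem_hwEig, Module.End.mem_eigenspace_iff]

lemma hwLeft_hwa_zero : hwLeft F (hwa F 0) = ((1 : F) / 2) • (hwa F 0 + hwa F 0) := by
  simp [hwLeft_apply, hwMul_hwa_zero_hwa, hws]

lemma hwLeft_hwa_succ (j : ℕ) : hwLeft F (hwa F ((j : ℤ) + 1)) =
    ((1 : F) / 2) • (hwa F 0 + hwa F ((j : ℤ) + 1)) + hws F (j + 1) := by
  rw [hwLeft_apply, hwMul_hwa_zero_hwa, show ((j : ℤ) + 1).natAbs = j + 1 by omega]

lemma hwLeft_hwa_neg_succ (j : ℕ) : hwLeft F (hwa F (-((j : ℤ) + 1))) =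
    ((1 : F) / 2) • (hwa F 0 + hwa F (-((j : ℤ) + 1))) + hws F (j + 1) := by
  rw [hwLeft_apply, hwMul_hwa_zero_hwa, show (-((j : ℤ) + 1)).natAbs = j + 1 by omega]

variable {F}

lemma hwa_zero_mem_hwEig_one (two : (2 : F) ≠ 0) : hwa F 0 ∈ hwEig F 1 := by
  rw [mem_hwEig, hwLeft_hwa_zero]
  match_scalars
  field_simp
  norm_num

lemma hwa_sub_mem_hwEig_half (j : ℕ) :
    hwa F ((j : ℤ) + 1) - hwa F (-((j : ℤ) + 1)) ∈ hwEig F (2 : F)⁻¹ := by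
  rw [mem_hwEig, map_sub, hwLeft_hwa_succ, hwLeft_hwa_neg_succ]
  module

lemma mem_hwEig_zero (two : (2 : F) ≠ 0) (j : ℕ) :
    (3 : F) • (hwa F ((j : ℤ) + 1) + hwa F (-((j : ℤ) + 1))) - (4 : F) • hws F (j + 1)
      - (6 : F) • hwa F 0 ∈ hwEig F 0 := by
  have four : (4 : F) ≠ 0 := by simpa [show (4 : F) = 2 * 2 by norm_num] using two
  have eight : (8 : F) ≠ 0 := by simpa [show (8 : F) = 2 * 2 * 2 by norm_num] using two
  rw [mem_hwEig, map_sub, map_sub, map_smul, map_smul, map_smul, map_add, hwLeft_hwa_succ,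
    hwLeft_hwa_neg_succ, hwLeft_hwa_zero, hwLeft_apply, hwMul_hwa_zero_hws_succ]
  match_scalars <;> field_simp <;> ring

lemma mem_hwEig_two (two : (2 : F) ≠ 0) (j : ℕ) :
    hwa F ((j : ℤ) + 1) + hwa F (-((j : ℤ) + 1)) + (4 : F) • hws F (j + 1)
      - (2 : F) • hwa F 0 ∈ hwEig F 2 := by
  have four : (4 : F) ≠ 0 := by simpa [show (4 : F) = 2 * 2 by norm_num] using two
  have eight : (8 : F) ≠ 0 := by simpa [show (8 : F) = 2 * 2 * 2 by norm_num] using two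
  rw [mem_hwEig, map_sub, map_add, map_smul, map_smul, map_add, hwLeft_hwa_succ,
    hwLeft_hwa_neg_succ, hwLeft_hwa_zero, hwLeft_apply, hwMul_hwa_zero_hws_succ]
  match_scalars <;> field_simp <;> ring

lemma span_hwa_zero_sup_hwEig_eq_top (two : (2 : F) ≠ 0) :
    Submodule.span F {hwa F 0} ⊔ (hwEig F 0 ⊔ hwEig F 2 ⊔ hwEig F (2 : F)⁻¹) = ⊤ := by
  set W := Submodule.span F {hwa F 0} ⊔ (hwEig F 0 ⊔ hwEig F 2 ⊔ hwEig F (2 : F)⁻¹)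
  have four : (4 : F) ≠ 0 := by simpa [show (4 : F) = 2 * 2 by norm_num] using two
  have eight : (8 : F) ≠ 0 := by simpa [show (8 : F) = 2 * 2 * 2 by norm_num] using two
  have mem_axis : hwa F 0 ∈ W :=
    (le_sup_left : _ ≤ W) (Submodule.mem_span_singleton_self _)
  have zero_le : hwEig F 0 ≤ W := (le_sup_left.trans le_sup_left).trans le_sup_right
  have two_le : hwEig F 2 ≤ W := (le_sup_right.trans le_sup_left).trans le_sup_right
  have half_le : hwEig F (2 : F)⁻¹ ≤ W := le_sup_right.trans le_sup_right
  have mem_sum (j : ℕ) : hwa F ((j : ℤ) + 1) + hwa F (-((j : ℤ) + 1)) ∈ W := by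
    convert W.add_mem (W.smul_mem (4 : F)⁻¹ (W.add_mem (zero_le (mem_hwEig_zero two j))
      (two_le (mem_hwEig_two two j)))) (W.smul_mem (2 : F) mem_axis) using 1
    match_scalars <;> field_simp <;> ring
  have mem_hwa_succ (j : ℕ) : hwa F ((j : ℤ) + 1) ∈ W := by
    convert W.smul_mem (2 : F)⁻¹
      (W.add_mem (mem_sum j) (half_le (hwa_sub_mem_hwEig_half j))) using 1
    match_scalars <;> field_simp <;> ring
  have mem_hwa_neg_succ (j : ℕ) : hwa F (-((j : ℤ) + 1)) ∈ W := by
    simpa using W.sub_mem (mem_sum j) (mem_hwa_succ j)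
  have mem_hws_succ (j : ℕ) : hws F (j + 1) ∈ W := by
    convert W.smul_mem (4 : F)⁻¹ (W.add_mem (W.sub_mem (two_le (mem_hwEig_two two j))
      (mem_sum j)) (W.smul_mem (2 : F) mem_axis)) using 1
    match_scalars <;> field_simp <;> ring
  have mem_single (p : ℤ ⊕ ℕ) : Finsupp.single p (1 : F) ∈ W := by
    rcases p with i | j
    · change hwa F i ∈ W
      obtain rfl | ⟨j, rfl | rfl⟩ : i = 0 ∨ ∃ j : ℕ, i = (j : ℤ) + 1 ∨ i = -((j : ℤ) + 1) := by
        by_cases hi : i = 0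
        · exact Or.inl hi
        · exact Or.inr ⟨i.natAbs - 1, by omega⟩
      · exact mem_axis
      · exact mem_hwa_succ j
      · exact mem_hwa_neg_succ j
    · exact mem_hws_succ j
  refine eq_top_iff.2 fun x _ => ?_
  induction x using Finsupp.induction_linear with
  | zero => exact W.zero_mem
  | add x y hx hy => exact W.add_mem (hx trivial) (hy trivial)
  | single p c => simpa using W.smul_mem c (mem_single p)

lemma iSupIndep_hwEig (two : (2 : F) ≠ 0) (three : (3 : F) ≠ 0) :
    iSupIndep (![hwEig F 1, hwEig F 0, hwEig F 2, hwEig F (2 : F)⁻¹] :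
      Fin 4 → Submodule F (HW F)) := by
  have one_ne_two : (1 : F) ≠ 2 := fun h => one_ne_zero (by linear_combination -h : (1 : F) = 0)
  have half_ne_one : (2 : F)⁻¹ ≠ 1 := by simpa using one_ne_two.symm
  have half_ne_two : (2 : F)⁻¹ ≠ 2 := fun h => three (by
    field_simp at h
    linear_combination -h)
  have inj : Function.Injective ![(1 : F), 0, 2, 2⁻¹] := by
    intro i j h
    fin_cases i <;> fin_cases j <;>
      simp_all [one_ne_two.symm, half_ne_one.symm, half_ne_two.symm, two.symm]
  convert (hwLeft F).eigenspaces_iSupIndep.comp inj using 1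
  funext i
  fin_cases i <;> simp [hwEig_eq_eigenspace]

variable (F)

theorem highwater_eigenspace_decomposition
    (h2 : ringChar F ≠ 2) (h3 : ringChar F ≠ 3) :
    DirectSum.IsInternal
      (![hwEig F 1, hwEig F 0, hwEig F 2, hwEig F (2 : F)⁻¹] : Fin 4 → Submodule F (HW F)) ∧
    hwEig F 1 = Submodule.span F {hwa F 0} := by
  have two : (2 : F) ≠ 0 := Ring.two_ne_zero h2
  have three : (3 : F) ≠ 0 := fun h => by
    have dvd : ringChar F ∣ 3 := ringChar.dvd (by exact_mod_cast h)
    rcases (Nat.dvd_prime Nat.prime_three).1 dvd with h1 | h1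
    · exact CharP.ringChar_ne_one h1
    · exact h3 h1
  have indep := iSupIndep_hwEig two three
  have top := span_hwa_zero_sup_hwEig_eq_top two
  have span_le : Submodule.span F {hwa F 0} ≤ hwEig F 1 :=
    (Submodule.span_singleton_le_iff_mem _ _).2 (hwa_zero_mem_hwEig_one two)
  refine ⟨DirectSum.isInternal_submodule_of_iSupIndep_of_iSup_eq_top indep ?_, ?_⟩
  · rw [eq_top_iff, ← top]
    refine sup_le (span_le.trans (le_iSup_of_le 0 le_rfl)) (sup_le (sup_le ?_ ?_) ?_)
    exacts [le_iSup_of_le 1 le_rfl, le_iSup_of_le 2 le_rfl, le_iSup_of_le 3 le_rfl]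
  · have disj : Disjoint (hwEig F 1) (hwEig F 0 ⊔ hwEig F 2 ⊔ hwEig F (2 : F)⁻¹) := by
      refine (indep 0).mono_right (sup_le (sup_le ?_ ?_) ?_)
      exacts [le_iSup₂_of_le 1 (by decide) le_rfl, le_iSup₂_of_le 2 (by decide) le_rfl,
        le_iSup₂_of_le 3 (by decide) le_rfl]
    refine le_antisymm ?_ span_le
    rw [← inf_top_eq (hwEig F 1), ← top, inf_comm, sup_inf_assoc_of_le _ span_le, inf_comm,
      disj.eq_bot, sup_bot_eq]
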